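/- arXiv:2302.06788 — 3 statements merged into one kernel-verified Lean document; each statement's English description precedes it below -/
import Mathlib

section
/- Let P(λ) = A_m λ^m + A_{m-1} λ^{m-1} + ... + A_1 λ + A_0 with m ≥ 2, where each A_i is an n×n doubly stochastic matrix and A_m, A_0 are permutation matrices. Then P(λ) has at least two distinct eigenvalues; that is, there exist λ1, λ2 ∈ ℂ with λ1 ≠ λ2 and det P(λ1) = det P(λ2) = 0. -/
/-!
Every row of every coefficient sums to `1`, so the all-ones vector `e` satisfies
`P(λ) e = (1 + λ + ⋯ + λ^m) e`. Hence each `(m + 1)`-th root of unity other than `1` is an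
eigenvalue. As `m + 1 ≥ 3`, a primitive root `ζ` and its square `ζ ^ 2` are two distinct ones.
-/

/-- A real square matrix is doubly stochastic: nonnegative entries, all row sums
and all column sums equal to `1`. -/
def IsDoublyStochastic {n : ℕ} (A : Matrix (Fin n) (Fin n) ℝ) : Prop :=
  (∀ i j, 0 ≤ A i j) ∧ (∀ i, ∑ j, A i j = 1) ∧ (∀ j, ∑ i, A i j = 1)

/-- A real square matrix is a permutation matrix. -/
def IsPermMatrix {n : ℕ} (A : Matrix (Fin n) (Fin n) ℝ) : Prop :=
  ∃ σ : Equiv.Perm (Fin n), ∀ i j, A i j = if j = σ i then 1 else 0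

/-- The all-ones vector lies in the kernel of `P(λ)`, since `1 + λ + ⋯ + λ^m = 0`. -/
lemma det_eq_zero_of_pow_eq_one {n m : ℕ} (hn : 0 < n)
    (A : Fin (m + 1) → Matrix (Fin n) (Fin n) ℝ)
    (hrow : ∀ k i, ∑ j, A k i j = 1) {z : ℂ} (hz : z ^ (m + 1) = 1) (hz1 : z ≠ 1) :
    (∑ i : Fin (m + 1), z ^ (i : ℕ) • (A i).map ((↑) : ℝ → ℂ)).det = 0 := by
  rw [← Matrix.exists_mulVec_eq_zero_iff]
  refine ⟨fun _ => 1, fun h => one_ne_zero (congrFun h ⟨0, hn⟩), ?_⟩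
  have hgeom : ∑ k : Fin (m + 1), z ^ (k : ℕ) = 0 := by
    rw [Fin.sum_univ_eq_sum_range (fun k => z ^ k), geom_sum_eq hz1, hz, sub_self, zero_div]
  ext i
  simp only [Matrix.mulVec, dotProduct, Matrix.sum_apply, Matrix.smul_apply, Matrix.map_apply,
    smul_eq_mul, mul_one, Pi.zero_apply]
  rw [Finset.sum_comm, ← hgeom]
  refine Finset.sum_congr rfl fun k _ => ?_
  rw [← Finset.mul_sum, ← Complex.ofReal_sum, hrow k i, Complex.ofReal_one, mul_one]

/-- A matrix polynomial of degree `m ≥ 2` with doubly stochastic coefficients, whose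
leading and constant coefficients are permutation matrices, has at least two distinct
eigenvalues. -/
theorem two_distinct_eigenvalues_of_doublyStochastic_coeffs
    (n m : ℕ) (hn : 0 < n) (hm : 2 ≤ m)
    (A : Fin (m + 1) → Matrix (Fin n) (Fin n) ℝ)
    (hDS : ∀ i, IsDoublyStochastic (A i))
    (hAm : IsPermMatrix (A (Fin.last m))) (hA0 : IsPermMatrix (A 0)) :
    ∃ lam1 lam2 : ℂ, lam1 ≠ lam2 ∧
      (∑ i : Fin (m + 1), lam1 ^ (i : ℕ) • (A i).map ((↑) : ℝ → ℂ)).det = 0 ∧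
      (∑ i : Fin (m + 1), lam2 ^ (i : ℕ) • (A i).map ((↑) : ℝ → ℂ)).det = 0 := by
  have hζ := Complex.isPrimitiveRoot_exp (m + 1) m.succ_ne_zero
  set ζ := Complex.exp (2 * Real.pi * Complex.I / ((m + 1 : ℕ) : ℂ))
  have h1 : ζ ≠ 1 := hζ.ne_one (by omega)
  have h2 : ζ ^ 2 ≠ 1 := hζ.pow_ne_one_of_pos_of_lt (by norm_num) (by omega)
  have hrow : ∀ k i, ∑ j, A k i j = 1 := fun k => (hDS k).2.1
  refine ⟨ζ, ζ ^ 2, fun h => h1 ?_, det_eq_zero_of_pow_eq_one hn A hrow hζ.pow_eq_one h1,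
    det_eq_zero_of_pow_eq_one hn A hrow ?_ h2⟩
  · have h0 : ζ ≠ 0 := Complex.exp_ne_zero _
    exact mul_left_cancel₀ h0 (by rw [mul_one, ← sq, ← h])
  · rw [← pow_mul, mul_comm, pow_mul, hζ.pow_eq_one, one_pow]
end

section
/- Let P(λ) = A_m λ^m + A_{m-1} λ^{m-1} + ... + A_1 λ + A_0 with m ≥ 2, where each A_i is an n×n unitary complex matrix. Then P(λ) has at least two distinct eigenvalues; that is, there exist λ1, λ2 ∈ ℂ with λ1 ≠ λ2 and det P(λ1) = det P(λ2) = 0. -/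
/-!
After multiplying by `(A 0)⋆` the constant coefficient becomes `1`, so that
`q(λ) = det (1 + λ B₁ + ⋯ + λ^m B_m)` with all `Bᵢ` unitary. Its coefficient of degree `0` is `1`,
that of degree `1` is `tr B₁`, of norm at most `n`, and that of degree `n * m`, which is the
leading one, is `det B_m`, of norm `1`. If `q` had a single root `a`, then
`q = c (λ - a)^(n m)` with `|c| = 1`; the constant coefficient forces `|a| = 1`, and the linear
coefficient then has norm `n m ≥ 2 n > n`, a contradiction.
-/

open Polynomial

namespace UnitaryMatPoly

/-- The matrix polynomial `∑ X ^ i • B i`, as a matrix with polynomial entries. -/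
noncomputable def polyMat {n m : ℕ} (B : Fin (m + 1) → Matrix (Fin n) (Fin n) ℂ) :
    Matrix (Fin n) (Fin n) ℂ[X] :=
  ∑ i : Fin (m + 1), (X : ℂ[X]) ^ (i : ℕ) • (B i).map C

variable {n m : ℕ} (B : Fin (m + 1) → Matrix (Fin n) (Fin n) ℂ)

lemma polyMat_apply (r s : Fin n) :
    polyMat B r s = ∑ i : Fin (m + 1), C (B i r s) * X ^ (i : ℕ) := by
  simp [polyMat, Matrix.sum_apply]

lemma natDegree_polyMat_apply_le (r s : Fin n) : (polyMat B r s).natDegree ≤ m := by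
  rw [polyMat_apply]
  refine natDegree_sum_le_of_forall_le _ _ fun i _ => ?_
  exact (natDegree_C_mul_X_pow_le _ _).trans (Nat.lt_succ_iff.mp i.2)

lemma coeff_polyMat_apply (r s : Fin n) : (polyMat B r s).coeff m = B (Fin.last m) r s := by
  rw [polyMat_apply, finsetSum_coeff, Finset.sum_eq_single (Fin.last m)]
  · simp
  · intro i _ hi
    rw [coeff_C_mul_X_pow, if_neg]
    intro h
    exact hi (Fin.ext h.symm)
  · simp

lemma eval_det_polyMat (z : ℂ) :
    (polyMat B).det.eval z = (∑ i : Fin (m + 1), z ^ (i : ℕ) • B i).det := by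
  rw [← coe_evalRingHom, RingHom.map_det]
  congr 1
  ext r s
  simp [polyMat_apply, eval_finsetSum, Matrix.sum_apply]
  exact Finset.sum_congr rfl fun i _ => mul_comm _ _

lemma natDegree_det_polyMat_le : (polyMat B).det.natDegree ≤ n * m := by
  rw [Matrix.det_apply]
  refine natDegree_sum_le_of_forall_le _ _ fun σ _ => ?_
  refine (natDegree_smul_le _ _).trans ((natDegree_prod_le _ _).trans ?_)
  refine (Finset.sum_le_card_nsmul _ _ m fun i _ => natDegree_polyMat_apply_le B _ _).trans ?_
  simp

lemma coeff_det_polyMat : (polyMat B).det.coeff (n * m) = (B (Fin.last m)).det := by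
  rw [Matrix.det_apply, Matrix.det_apply, finsetSum_coeff]
  refine Finset.sum_congr rfl fun σ _ => ?_
  have h := coeff_prod_of_natDegree_le (s := Finset.univ) (fun i => polyMat B (σ i) i) m
    fun i _ => natDegree_polyMat_apply_le B _ _
  simp only [Finset.card_univ, Fintype.card_fin, coeff_polyMat_apply] at h
  rw [coeff_smul, h]

lemma coeff_one_det_polyMat (hm : 2 ≤ m) (h0 : B 0 = 1) :
    (polyMat B).det.coeff 1 = (B 1).trace := by
  obtain ⟨k, rfl⟩ : ∃ k, m = k + 1 := ⟨m - 1, by omega⟩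
  set M : Matrix (Fin n) (Fin n) ℂ[X] :=
    ∑ i : Fin (k + 1), (X : ℂ[X]) ^ (i : ℕ) • (B i.succ).map C with hM
  have h : polyMat B = 1 + (X : ℂ[X]) • M := by
    rw [polyMat, Fin.sum_univ_succ, hM, Finset.smul_sum]
    simp [h0, smul_smul, pow_succ']
  have hz : M.map (fun p => p.coeff 0) = B 1 := by
    ext r s
    rw [hM, Fin.sum_univ_succ]
    simp [Matrix.sum_apply, coeff_zero_eq_eval_zero, eval_finsetSum]
  rw [h, Matrix.det_one_add_smul, ← hz]
  simp [coeff_one, Matrix.trace, coeff_mul_X_pow']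

lemma norm_det_of_unitary {U : Matrix (Fin n) (Fin n) ℂ}
    (hU : U ∈ Matrix.unitaryGroup (Fin n) ℂ) : ‖U.det‖ = 1 :=
  CStarRing.norm_of_mem_unitary (Matrix.det_of_mem_unitary hU)

lemma norm_trace_le_of_unitary {U : Matrix (Fin n) (Fin n) ℂ}
    (hU : U ∈ Matrix.unitaryGroup (Fin n) ℂ) : ‖U.trace‖ ≤ n := by
  refine (norm_sum_le_of_le (f := fun i => U i i) _ fun i _ =>
    entry_norm_bound_of_unitary hU i i).trans ?_
  simp

/-- A complex polynomial all of whose roots coincide is a multiple of a power of `X - a`. -/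
lemma exists_eq_of_unique_root {q : ℂ[X]} (hq : 0 < q.natDegree)
    (h : ∀ x y, q.eval x = 0 → q.eval y = 0 → x = y) :
    ∃ a, q = C q.leadingCoeff * (X - C a) ^ q.natDegree := by
  have hs := IsAlgClosed.splits q
  have q0 : q ≠ 0 := by rintro rfl; simp at hq
  obtain ⟨a, ha⟩ := IsAlgClosed.exists_root q (by
    intro h0; rw [natDegree_eq_of_degree_eq_some h0] at hq; exact absurd hq (lt_irrefl _))
  have hr : q.roots = Multiset.replicate q.natDegree a := by
    rw [Multiset.eq_replicate]
    exact ⟨hs.natDegree_eq_card_roots.symm, fun b hb => h _ _ ((mem_roots q0).1 hb) ha⟩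
  refine ⟨a, ?_⟩
  conv_lhs => rw [hs.eq_prod_roots, hr]
  simp

/-- The case of constant coefficient `1`, to which the general one reduces. -/
lemma exists_two_roots (hn : 0 < n) (hm : 2 ≤ m)
    (hB : ∀ i, B i ∈ Matrix.unitaryGroup (Fin n) ℂ) (h0 : B 0 = 1) :
    ∃ x y : ℂ, x ≠ y ∧ (polyMat B).det.eval x = 0 ∧ (polyMat B).det.eval y = 0 := by
  by_contra! hcon
  set q := (polyMat B).det with hq
  have hlead := norm_det_of_unitary (hB (Fin.last m))
  rw [← coeff_det_polyMat, ← hq] at hlead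
  have hdeg : q.natDegree = n * m := by
    refine le_antisymm (natDegree_det_polyMat_le B) (le_natDegree_of_ne_zero ?_)
    intro h
    simp [h] at hlead
  have hpos : 0 < n * m := by positivity
  obtain ⟨a, ha⟩ := exists_eq_of_unique_root (q := q) (hdeg ▸ hpos) (by
    intro x y hx hy
    by_contra hxy
    exact hcon x y hxy hx hy)
  rw [leadingCoeff, hdeg] at ha
  have hc0 : q.eval 0 = 1 := by
    rw [hq, eval_det_polyMat, Fin.sum_univ_succ]
    simp [h0]
  have hanorm : ‖a‖ = 1 := by
    rw [ha] at hc0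
    have := congrArg norm hc0
    simp only [eval_mul, eval_C, eval_pow, eval_sub, eval_X, norm_mul, hlead, norm_pow, zero_sub,
      norm_neg, one_mul, norm_one] at this
    exact (pow_eq_one_iff_of_nonneg (norm_nonneg a) hpos.ne').1 this
  have hc1 : ‖q.coeff 1‖ = n * m := by
    rw [ha, coeff_C_mul, sub_eq_add_neg, ← C_neg, coeff_X_add_C_pow]
    simp [hlead, hanorm]
  have htr := norm_trace_le_of_unitary (hB 1)
  rw [← coeff_one_det_polyMat B hm h0, ← hq, hc1] at htr
  have hn' : (0 : ℝ) < n := by exact_mod_cast hn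
  have hm' : (2 : ℝ) ≤ m := by exact_mod_cast hm
  nlinarith

end UnitaryMatPoly

open UnitaryMatPoly in
/-- A matrix polynomial of degree `m ≥ 2` with unitary complex matrix coefficients has at
least two distinct eigenvalues. -/
theorem two_distinct_eigenvalues_of_unitary_coeffs
    (n m : ℕ) (hn : 0 < n) (hm : 2 ≤ m)
    (A : Fin (m + 1) → Matrix (Fin n) (Fin n) ℂ)
    (hU : ∀ i, A i ∈ Matrix.unitaryGroup (Fin n) ℂ) :
    ∃ lam1 lam2 : ℂ, lam1 ≠ lam2 ∧
      (∑ i : Fin (m + 1), lam1 ^ (i : ℕ) • A i).det = 0 ∧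
      (∑ i : Fin (m + 1), lam2 ^ (i : ℕ) • A i).det = 0 := by
  have hs : star (A 0) ∈ Matrix.unitaryGroup (Fin n) ℂ := Unitary.star_mem (hU 0)
  have hd : (star (A 0)).det ≠ 0 := by
    intro h
    have := norm_det_of_unitary hs
    simp [h] at this
  obtain ⟨x, y, hxy, hx, hy⟩ := exists_two_roots (fun i => star (A 0) * A i) hn hm
    (fun i => mul_mem hs (hU i)) (Unitary.star_mul_self_of_mem (hU 0))
  have key : ∀ z : ℂ, (polyMat fun i => star (A 0) * A i).det.eval z = 0 →
      (∑ i : Fin (m + 1), z ^ (i : ℕ) • A i).det = 0 := by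
    intro z hz
    rw [eval_det_polyMat] at hz
    simp only [← Matrix.mul_smul, ← Finset.mul_sum, Matrix.det_mul] at hz
    exact (mul_eq_zero.1 hz).resolve_left hd
  exact ⟨x, y, hxy, key x hx, key y hy⟩
end

section
/- Let A_0, A_1, ..., A_m be n×n doubly stochastic matrices and let P(λ) = A_m λ^m + ... + A_1 λ + A_0. Then the scalar polynomial λ^m + λ^{m-1} + ... + λ + 1 divides the polynomial det P(λ); that is, there is a polynomial q(λ) with det P(λ) = (λ^m + ... + λ + 1) q(λ). -/
/-!
Each row of `P(λ)` sums to `g(λ) = λ^m + ⋯ + λ + 1`, because each row of each `Aᵢ` sums to `1`;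
hence `P 𝟙 = g 𝟙` over the polynomial ring. Multiplying by the adjugate gives
`det P • 𝟙 = g • (adj P) 𝟙`, and any coordinate of this identity exhibits `g` as a divisor of
`det P` (`dvd_det_of_row_sum`). Evaluating at `λ` gives the claim.
-/

/-- A common value of all row sums of a nonempty square matrix divides its determinant. -/
theorem dvd_det_of_row_sum {ι R : Type*} [Fintype ι] [DecidableEq ι] [CommRing R]
    (M : Matrix ι ι R) (g : R) (h : ∀ i, ∑ j, M i j = g) (k : ι) : g ∣ M.det := by
  have h1 : M.mulVec 1 = g • (1 : ι → R) := by
    ext i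
    simp [Matrix.mulVec, dotProduct, h]
  have h2 : M.adjugate.mulVec (M.mulVec 1) = M.det • (1 : ι → R) := by
    rw [Matrix.mulVec_mulVec, Matrix.adjugate_mul, Matrix.smul_mulVec, Matrix.one_mulVec]
  rw [h1, Matrix.mulVec_smul] at h2
  have h3 := congrFun h2 k
  simp only [Pi.smul_apply, Pi.one_apply, smul_eq_mul, mul_one] at h3
  exact ⟨_, h3.symm⟩


/-- If `A₀, …, Aₘ` are `n × n` doubly stochastic matrices and
`P(λ) = Aₘ λ^m + ⋯ + A₁ λ + A₀`, then the scalar polynomial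
`λ^m + λ^{m-1} + ⋯ + λ + 1` divides `det P(λ)`: there is a polynomial `q` with
`det P(λ) = (λ^m + ⋯ + λ + 1) q(λ)` for all `λ`. -/
theorem geomSum_dvd_det_of_doublyStochastic_coeffs
    (n m : ℕ) (hn : 0 < n) (A : Fin (m + 1) → Matrix (Fin n) (Fin n) ℝ)
    (hDS : ∀ i, IsDoublyStochastic (A i)) :
    ∃ q : Polynomial ℂ, ∀ lam : ℂ,
      (∑ i : Fin (m + 1), lam ^ (i : ℕ) • (A i).map ((↑) : ℝ → ℂ)).det =
        (∑ i ∈ Finset.range (m + 1), lam ^ i) * q.eval lam := by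
  let P : Matrix (Fin n) (Fin n) (Polynomial ℂ) :=
    fun a b => ∑ i : Fin (m + 1), Polynomial.X ^ (i : ℕ) * Polynomial.C ((A i a b : ℝ) : ℂ)
  have hrow : ∀ a, ∑ b, P a b = ∑ i ∈ Finset.range (m + 1), (Polynomial.X : Polynomial ℂ) ^ i := by
    intro a
    rw [Finset.sum_comm, Finset.sum_range]
    refine Finset.sum_congr rfl fun i _ => ?_
    rw [← Finset.mul_sum, ← map_sum, ← Complex.ofReal_sum, (hDS i).2.1 a]
    simp
  obtain ⟨q, hq⟩ := dvd_det_of_row_sum P _ hrow ⟨0, hn⟩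
  refine ⟨q, fun lam => ?_⟩
  have heval := congrArg (Polynomial.evalRingHom lam) hq
  rw [RingHom.map_det] at heval
  have hP : (Polynomial.evalRingHom lam).mapMatrix P =
      ∑ i : Fin (m + 1), lam ^ (i : ℕ) • (A i).map ((↑) : ℝ → ℂ) := by
    ext a b
    change Polynomial.eval lam (P a b) = _
    simp only [P, Polynomial.eval_finsetSum, Polynomial.eval_mul, Polynomial.eval_pow,
      Polynomial.eval_X, Polynomial.eval_C, Matrix.sum_apply, Matrix.smul_apply, Matrix.map_apply,
      smul_eq_mul]
  rw [hP] at heval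
  simpa [Polynomial.eval_finsetSum] using heval
end
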